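/- Let A be a k-category, regarded as a dg category A_dg with hom-spaces concentrated in degree 0 and zero differential. Then the inclusion pretr(A_dg) ⊆ Twist((A_dg^[•])^⊕) of the full dg subcategory of one-sided twisted complexes is an equivalence of dg categories, and both dg categories are equivalent to Ch^b_dg(A), the dg category of bounded complexes whose objects are formal finite direct sums of objects of A. In particular, every twisted complex over (A_dg^[•])^⊕ is dg-isomorphic, via a permutation of its summands, to a one-sided twisted complex. -/

import Mathlib

/-! Core formal framework: dg categories over a field `k`, given by explicit data
(`DGData`) together with the dg-category axioms (`IsDGCat`), following the
conventions of the paper: hom-sets are `ℤ`-graded `k`-vector spaces, `d` has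
degree `1`, composition is associative of degree `0`, identities are closed of
degree `0`. -/

namespace P

universe u v

structure DGData (k : Type) [Field k] where
  Obj : Type u
  Hom : Obj → Obj → ℤ → Type v
  homAdd : ∀ A B i, AddCommGroup (Hom A B i)
  homMod : ∀ A B i, Module k (Hom A B i)
  d : ∀ {A B : Obj} {i : ℤ}, Hom A B i → Hom A B (i + 1)
  comp : ∀ {A B C : Obj} {i j : ℤ}, Hom B C j → Hom A B i → Hom A C (j + i)
  id : ∀ A : Obj, Hom A A 0

attribute [instance] DGData.homAdd DGData.homMod

variable {k : Type} [Field k]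

/-- Transport of a morphism along an equality of degrees. -/
def DGData.cast (D : DGData k) {A B : D.Obj} {i i' : ℤ} (h : i = i')
    (x : D.Hom A B i) : D.Hom A B i' := h ▸ x

/-- Transport of a morphism along equalities of its source, target and degree. -/
def DGData.hcast (D : DGData k) {A A' B B' : D.Obj} {i i' : ℤ}
    (hA : A = A') (hB : B = B') (hi : i = i') (x : D.Hom A B i) :
    D.Hom A' B' i' := by
  subst hA; subst hB; subst hi; exact x

/-- The axioms making the data `D` a dg category: hom-sets are complexes of
`k`-vector spaces, composition is `k`-bilinear, the graded Leibniz rule holds,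
composition is associative, and identities are closed two-sided units. -/
structure IsDGCat (D : DGData k) : Prop where
  d_add : ∀ {A B : D.Obj} {g : ℤ} (x y : D.Hom A B g), D.d (x + y) = D.d x + D.d y
  d_smul : ∀ {A B : D.Obj} {g : ℤ} (c : k) (x : D.Hom A B g), D.d (c • x) = c • D.d x
  comp_add_left : ∀ {A B C : D.Obj} {g h : ℤ} (β₁ β₂ : D.Hom B C h) (α : D.Hom A B g),
      D.comp (β₁ + β₂) α = D.comp β₁ α + D.comp β₂ α
  comp_add_right : ∀ {A B C : D.Obj} {g h : ℤ} (β : D.Hom B C h) (α₁ α₂ : D.Hom A B g),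
      D.comp β (α₁ + α₂) = D.comp β α₁ + D.comp β α₂
  comp_smul_left : ∀ {A B C : D.Obj} {g h : ℤ} (c : k) (β : D.Hom B C h) (α : D.Hom A B g),
      D.comp (c • β) α = c • D.comp β α
  comp_smul_right : ∀ {A B C : D.Obj} {g h : ℤ} (c : k) (β : D.Hom B C h) (α : D.Hom A B g),
      D.comp β (c • α) = c • D.comp β α
  d_d : ∀ {A B : D.Obj} {g : ℤ} (x : D.Hom A B g), D.d (D.d x) = 0
  leibniz : ∀ {A B C : D.Obj} {g h : ℤ} (β : D.Hom B C h) (α : D.Hom A B g),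
      D.d (D.comp β α) =
        D.cast (by ring) (D.comp (D.d β) α) +
          ((-1 : k) ^ h) • D.cast (by ring) (D.comp β (D.d α))
  assoc : ∀ {A B C E : D.Obj} {g h l : ℤ} (γ : D.Hom C E l) (β : D.Hom B C h)
      (α : D.Hom A B g),
      D.comp γ (D.comp β α) = D.cast (by ring) (D.comp (D.comp γ β) α)
  id_comp : ∀ {A B : D.Obj} {g : ℤ} (α : D.Hom A B g),
      D.cast (zero_add g) (D.comp (D.id B) α) = α
  comp_id : ∀ {A B : D.Obj} {g : ℤ} (α : D.Hom A B g),
      D.cast (add_zero g) (D.comp α (D.id A)) = α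
  d_id : ∀ A : D.Obj, D.d (D.id A) = 0

/-- A morphism is closed if its differential vanishes. -/
def DGData.IsClosed (D : DGData k) {A B : D.Obj} {g : ℤ} (x : D.Hom A B g) : Prop :=
  D.d x = 0

/-- The Maurer-Cartan equation `d(p) + p ∘ p = 0` for a degree `1` endomorphism. -/
def DGData.MC (D : DGData k) {A : D.Obj} (p : D.Hom A A 1) : Prop :=
  D.d p + D.comp p p = 0

/-- A chain of `n` (in fact, infinitely many; only the first `n` are ever used)
composable morphisms `α m : A m ⟶ A (m+1)`, where `α m` is recorded together
with its *shifted* degree `g m`, i.e. `α m` lies in degree `g m + 1`.  This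
encodes an element `s α_n ⊗ ⋯ ⊗ s α_1` of `S(A n, A (n+1)) ⊗ ⋯ ⊗ S(A 0, A 1)`
(the chain is indexed so that index `0` is the first morphism `α^1`). -/
abbrev DGData.Chain (D : DGData k) (A : ℕ → D.Obj) (g : ℕ → ℤ) : Type _ :=
  ∀ m : ℕ, D.Hom (A m) (A (m + 1)) (g m + 1)

/-- Partial sums of the (shifted) degrees of a chain. -/
def psum (g : ℕ → ℤ) (n : ℕ) : ℤ := ∑ m ∈ Finset.range n, g m

lemma psum_succ (g : ℕ → ℤ) (r : ℕ) : psum g (r + 1) = psum g r + g r :=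
  Finset.sum_range_succ g r

lemma psum_one (g : ℕ → ℤ) : psum g 1 = g 0 := by simp [psum]

lemma psum_two (g : ℕ → ℤ) : psum g 2 = g 0 + g 1 := by
  simp [psum, Finset.sum_range_succ]

lemma psum_const_zero (n : ℕ) : psum (fun _ => (0 : ℤ)) n = 0 := by simp [psum]

lemma psum_shift (g : ℕ → ℤ) (t : ℕ) :
    ∀ r, psum (fun m => g (t + m)) r = psum g (t + r) - psum g t := by
  intro r
  induction r with
  | zero => simp [psum]
  | succ r ih => rw [psum_succ, ih, Nat.add_succ, psum_succ]; ring

/-- Update of a chain in one slot (keeping the degree). -/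
def DGData.upd0 (D : DGData k) {A : ℕ → D.Obj} {g : ℕ → ℤ} (α : D.Chain A g)
    (m : ℕ) (v : D.Hom (A m) (A (m + 1)) (g m + 1)) : D.Chain A g := fun t =>
  if h : t = m then (by subst h; exact v) else α t

/-- Objects of the chain obtained by replacing the `j` consecutive entries
starting at position `l` by a single entry. -/
def splObj {τ : Type u} (A : ℕ → τ) (l j : ℕ) : ℕ → τ := fun t =>
  if t ≤ l then A t else A (t + j - 1)

/-- Degrees of the spliced chain; the new entry at position `l` has (shifted)
degree `w`. -/
def splG (g : ℕ → ℤ) (l j : ℕ) (w : ℤ) : ℕ → ℤ := fun t =>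
  if t < l then g t else if t = l then w else g (t + j - 1)

lemma splObj_le {τ : Type u} (A : ℕ → τ) {l j t : ℕ} (h : t ≤ l) :
    splObj A l j t = A t := if_pos h

lemma splObj_gt {τ : Type u} (A : ℕ → τ) {l j t : ℕ} (h : ¬ t ≤ l) :
    splObj A l j t = A (t + j - 1) := if_neg h

lemma splObj_zero {τ : Type u} (A : ℕ → τ) (l j : ℕ) : splObj A l j 0 = A 0 :=
  splObj_le A (Nat.zero_le l)

lemma splObj_last {τ : Type u} (A : ℕ → τ) {l j n : ℕ} (h1 : 1 ≤ j)
    (h2 : l + j ≤ n) : splObj A l j (n - j + 1) = A n := by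
  unfold splObj
  rw [if_neg (by omega)]
  exact congrArg A (by omega)

lemma splG_lt {g : ℕ → ℤ} {l j : ℕ} {w : ℤ} {t : ℕ} (h : t < l) :
    splG g l j w t = g t := by unfold splG; rw [if_pos h]

lemma splG_eq {g : ℕ → ℤ} {l j : ℕ} {w : ℤ} {t : ℕ} (h : t = l) :
    splG g l j w t = w := by unfold splG; rw [if_neg (by omega), if_pos h]

lemma splG_gt {g : ℕ → ℤ} {l j : ℕ} {w : ℤ} {t : ℕ} (h1 : ¬ t < l) (h2 : ¬ t = l) :
    splG g l j w t = g (t + j - 1) := by unfold splG; rw [if_neg h1, if_neg h2]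

/-- The sum of the degrees of the spliced chain, when the inserted entry has
the degree of a degree `1` operation applied to the block it replaces. -/
lemma psum_splG (g : ℕ → ℤ) {l j n : ℕ} (h1 : 1 ≤ j) (h2 : l + j ≤ n) :
    psum (splG g l j (psum (fun m => g (l + m)) j + 1)) (n - j + 1) =
      psum g n + 1 := by
  have hln : l + 1 ≤ n - j + 1 := by omega
  rw [psum, ← Finset.sum_range_add_sum_Ico _ hln]
  have e1 : (∑ t ∈ Finset.range (l + 1),
      splG g l j (psum (fun m => g (l + m)) j + 1) t)
      = psum g l + (psum (fun m => g (l + m)) j + 1) := by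
    rw [Finset.sum_range_succ]
    congr 1
    · exact Finset.sum_congr rfl fun t ht => splG_lt (Finset.mem_range.mp ht)
    · exact splG_eq rfl
  have e2 : (∑ t ∈ Finset.Ico (l + 1) (n - j + 1),
      splG g l j (psum (fun m => g (l + m)) j + 1) t)
      = ∑ u ∈ Finset.Ico (l + j) n, g u := by
    rw [Finset.sum_Ico_eq_sum_range, Finset.sum_Ico_eq_sum_range]
    have hc : n - j + 1 - (l + 1) = n - (l + j) := by omega
    rw [hc]
    refine Finset.sum_congr rfl fun i hi => ?_
    rw [splG_gt (by omega) (by omega)]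
    congr 1
    omega
  have e3 : (∑ u ∈ Finset.Ico (l + j) n, g u) = psum g n - psum g (l + j) := by
    rw [psum, psum, Finset.sum_Ico_eq_sub _ (by omega : l + j ≤ n)]
  rw [e1, e2, e3, psum_shift g l j]
  ring

/-- The spliced chain: replace the `j` entries starting at position `l` by the
single entry `v`. -/
def DGData.splChain (D : DGData k) {A : ℕ → D.Obj} {g : ℕ → ℤ} (α : D.Chain A g)
    (l j : ℕ) (hj : 1 ≤ j) {w : ℤ} (v : D.Hom (A l) (A (l + j)) (w + 1)) :
    D.Chain (splObj A l j) (splG g l j w) := fun t =>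
  if h1 : t < l then
    D.hcast (splObj_le A (le_of_lt h1)).symm (splObj_le A (by omega)).symm
      (by rw [splG_lt h1]) (α t)
  else if h2 : t = l then
    D.hcast (by rw [show t = l from h2]; exact (splObj_le A le_rfl).symm)
      (by rw [show t = l from h2, splObj_gt A (show ¬ l + 1 ≤ l by omega)]
          exact congrArg A (by omega))
      (by rw [splG_eq h2]) v
  else
    D.hcast (splObj_gt A (by omega)).symm
      (by rw [splObj_gt A (show ¬ t + 1 ≤ l by omega)]; exact congrArg A (by omega))
      (by rw [splG_gt h1 h2]) (α (t + j - 1))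

end P

namespace P

variable {k : Type} [Field k]

/-- Objects of the completion by direct sums: finite (possibly empty) families
of objects. -/
abbrev matObj (D : DGData k) : Type _ := (n : ℕ) × (Fin n → D.Obj)

/-- The completion by direct sums `A^⊕`: morphisms are matrices of morphisms of
`A`, the differential acts entrywise, composition is matrix multiplication and
identities are diagonal identity matrices. -/
def matData (D : DGData k) : DGData k where
  Obj := matObj D
  Hom A B g := ∀ (j : Fin B.1) (i : Fin A.1), D.Hom (A.2 i) (B.2 j) g
  homAdd _ _ _ := inferInstance
  homMod _ _ _ := inferInstance
  d := fun α j i => D.d (α j i)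
  comp := fun β α l i => ∑ j, D.comp (β l j) (α j i)
  id A := fun j i =>
    if h : i = j then D.hcast rfl (congrArg A.2 h) rfl (D.id (A.2 i)) else 0

/-- A direct sum of the finite family `As` in a dg category: an object together
with closed degree `0` inclusions and projections satisfying
`π i ∘ ι i = id` and `∑ i, ι i ∘ π i = id`. -/
structure DirectSumData (D : DGData k) (n : ℕ) (As : Fin n → D.Obj) where
  obj : D.Obj
  ι : ∀ i, D.Hom (As i) obj 0
  π : ∀ i, D.Hom obj (As i) 0
  ι_closed : ∀ i, D.d (ι i) = 0
  π_closed : ∀ i, D.d (π i) = 0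
  π_ι : ∀ i, D.cast (by norm_num) (D.comp (π i) (ι i)) = D.id (As i)
  sum_ι_π : (∑ i, D.cast (by norm_num : (0:ℤ) + 0 = 0) (D.comp (ι i) (π i))) = D.id obj

/-- A dg category *has direct sums* if it is equipped with a choice of direct
sum for every finite family of objects. -/
structure HasDirectSums (D : DGData k) where
  dsum : ∀ (n : ℕ) (As : Fin n → D.Obj), DirectSumData D n As

/-- Concatenation of two families of objects. -/
def concatPair (D : DGData k) (A B : matObj D) : matObj D :=
  ⟨A.1 + B.1, fun j => if h : (j : ℕ) < A.1 then A.2 ⟨j, h⟩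
    else B.2 ⟨(j : ℕ) - A.1, by have := j.isLt; omega⟩⟩

lemma concatPair_left (D : DGData k) (A B : matObj D) (j : Fin (A.1 + B.1))
    (r : Fin A.1) (h : (j : ℕ) = (r : ℕ)) : A.2 r = (concatPair D A B).2 j := by
  have hlt : (j : ℕ) < A.1 := by omega
  show A.2 r = if h' : (j : ℕ) < A.1 then A.2 ⟨(j : ℕ), h'⟩
    else B.2 ⟨(j : ℕ) - A.1, by have := j.isLt; omega⟩
  rw [dif_pos hlt]
  exact congrArg A.2 (Fin.ext h.symm)

lemma concatPair_right (D : DGData k) (A B : matObj D) (j : Fin (A.1 + B.1))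
    (r : Fin B.1) (h : (j : ℕ) = A.1 + (r : ℕ)) : B.2 r = (concatPair D A B).2 j := by
  have hlt : ¬ (j : ℕ) < A.1 := by omega
  show B.2 r = if h' : (j : ℕ) < A.1 then A.2 ⟨(j : ℕ), h'⟩
    else B.2 ⟨(j : ℕ) - A.1, by have := j.isLt; omega⟩
  rw [dif_neg hlt]
  exact congrArg B.2 (Fin.ext (show (r : ℕ) = (j : ℕ) - A.1 by omega))

/-- The block inclusion matrices of the concatenation of two families. -/
def blockι (D : DGData k) (A B : matObj D) :
    ∀ i : Fin 2, (matData D).Hom (![A, B] i) (concatPair D A B) 0 :=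
  Fin.cons
    (fun j r => if h : (j : ℕ) = (r : ℕ) then
        D.hcast rfl (concatPair_left D A B j r h) rfl (D.id (A.2 r)) else 0)
    (Fin.cons
      (fun j r => if h : (j : ℕ) = A.1 + (r : ℕ) then
          D.hcast rfl (concatPair_right D A B j r h) rfl (D.id (B.2 r)) else 0)
      finZeroElim)

/-- The block projection matrices of the concatenation of two families. -/
def blockπ (D : DGData k) (A B : matObj D) :
    ∀ i : Fin 2, (matData D).Hom (concatPair D A B) (![A, B] i) 0 :=
  Fin.cons
    (fun r j => if h : (j : ℕ) = (r : ℕ) then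
        D.hcast rfl (concatPair_left D A B j r h).symm rfl
          (D.id ((concatPair D A B).2 j)) else 0)
    (Fin.cons
      (fun r j => if h : (j : ℕ) = A.1 + (r : ℕ) then
          D.hcast rfl (concatPair_right D A B j r h).symm rfl
            (D.id ((concatPair D A B).2 j)) else 0)
      finZeroElim)

end P

namespace P

variable {k : Type} [Field k]

/-- Data of chosen translations: for every object `A` and `i : ℤ` an object
`A[i] = shift A i` together with a degree `i` morphism `s A i : A[i] → A` and a
candidate inverse. -/
structure TranslationData (D : DGData k) where
  shift : D.Obj → ℤ → D.Obj
  s : ∀ (A : D.Obj) (i : ℤ), D.Hom (shift A i) A i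
  sInv : ∀ (A : D.Obj) (i : ℤ), D.Hom A (shift A i) (-i)

/-- The axioms: `s A i` is a closed isomorphism of degree `i` with inverse
`sInv A i`. -/
structure IsTranslationData (D : DGData k) (T : TranslationData D) : Prop where
  s_closed : ∀ A i, D.d (T.s A i) = 0
  sInv_closed : ∀ A i, D.d (T.sInv A i) = 0
  s_sInv : ∀ A i, D.cast (by ring) (D.comp (T.s A i) (T.sInv A i)) = D.id A
  sInv_s : ∀ A i, D.cast (by ring) (D.comp (T.sInv A i) (T.s A i)) = D.id (T.shift A i)

/-- A dg category `has translations` if it is equipped with such data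
satisfying the axioms. -/
structure HasTranslations (D : DGData k) where
  T : TranslationData D
  isT : IsTranslationData D T

/-- The morphism `⟨j|α|i⟩ := sInv ∘ α ∘ s : A[i] → B[j]` between translations. -/
def trHom (D : DGData k) (T : TranslationData D) {A B : D.Obj} {a : ℤ}
    (j : ℤ) (α : D.Hom A B a) (i : ℤ) :
    D.Hom (T.shift A i) (T.shift B j) (-j + (a + i)) :=
  D.comp (T.sInv B j) (D.comp α (T.s A i))

/-- Objects of the completion by translations: pairs `A[i]`. -/
abbrev trObj (D : DGData k) : Type _ := D.Obj × ℤ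

/-- The completion by translations `A^[•]`: a morphism `A[i] → B[j]` of degree
`g` is a morphism `α : A → B` of `A` (of degree `g + j - i`), written
`⟨j|α|i⟩`; degrees, differential, composition and identities are given by the
formulas of Lemma `formulas_translations` of the paper. -/
def trData (D : DGData k) : DGData k where
  Obj := trObj D
  Hom A B g := D.Hom A.1 B.1 (g - A.2 + B.2)
  homAdd _ _ _ := inferInstance
  homMod _ _ _ := inferInstance
  d := fun {A B g} x => ((-1 : k) ^ B.2) • D.cast (by ring) (D.d x)
  comp := fun {A B C g h} y x => D.cast (by ring) (D.comp y x)
  id A := D.cast (by ring) (D.id A.1)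

/-- The canonical translations on the completion by translations:
`A[i][j] := A[i+j]` with structural isomorphism `⟨i| id_A |i+j⟩`. -/
def trTrans (D : DGData k) : TranslationData (trData D) where
  shift X j := (X.1, X.2 + j)
  s X j := D.cast (by ring) (D.id X.1)
  sInv X j := D.cast (by ring) (D.id X.1)

end P

namespace P

variable {k : Type} [Field k]

/-- Data of chosen twisted complexes: for every object `A` and Maurer-Cartan
degree `1` endomorphism `p` of `A`, an object `{A|p}` with a degree `0`
morphism `ι : {A|p} → A` and a candidate inverse. -/
structure TwistedData (D : DGData k) where
  obj : ∀ (A : D.Obj) (p : D.Hom A A 1), D.MC p → D.Obj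
  ι : ∀ (A : D.Obj) (p : D.Hom A A 1) (hp : D.MC p), D.Hom (obj A p hp) A 0
  ιInv : ∀ (A : D.Obj) (p : D.Hom A A 1) (hp : D.MC p), D.Hom A (obj A p hp) 0

/-- The axioms: `ι` is a degree `0` isomorphism (not necessarily closed)
satisfying `d(ι) + p ∘ ι = 0`. -/
structure IsTwistedData (D : DGData k) (T : TwistedData D) : Prop where
  ι_ιInv : ∀ A p hp, D.cast (by ring) (D.comp (T.ι A p hp) (T.ιInv A p hp)) = D.id A
  ιInv_ι : ∀ A p hp, D.cast (by ring) (D.comp (T.ιInv A p hp) (T.ι A p hp))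
      = D.id (T.obj A p hp)
  dι : ∀ A p hp, D.d (T.ι A p hp) + D.cast (by ring) (D.comp p (T.ι A p hp)) = 0

/-- A dg category `has twisted complexes` if it is equipped with such data
satisfying the axioms. -/
structure HasTwistedComplexes (D : DGData k) where
  T : TwistedData D
  isT : IsTwistedData D T

/-- The morphism `{q|α|p} := ι_q⁻¹ ∘ α ∘ ι_p : {A|p} → {B|q}`. -/
def twHom (D : DGData k) (T : TwistedData D) {A B : D.Obj} {a : ℤ}
    {q : D.Hom B B 1} (hq : D.MC q) (α : D.Hom A B a) {p : D.Hom A A 1}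
    (hp : D.MC p) : D.Hom (T.obj A p hp) (T.obj B q hq) (0 + (a + 0)) :=
  D.comp (T.ιInv B q hq) (D.comp α (T.ι A p hp))

/-- Objects of the completion by twisted complexes: pairs `{A|p}` with
`p : A → A` of degree `1` satisfying the Maurer-Cartan equation. -/
abbrev twObj (D : DGData k) : Type _ := (A : D.Obj) × {p : D.Hom A A 1 // D.MC p}

/-- The completion by twisted complexes `Twist(A)`: morphisms
`{A|p} → {B|q}` of degree `g` are morphisms `α : A → B` of degree `g`, written
`{q|α|p}`; composition and identities are those of `A`, and the differential is
`d({q|α|p}) = {q|(q∘α)|p} + {q|dα|p} + (-1)^{|α|+1} {q|(α∘p)|p}`. -/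
def twData (D : DGData k) : DGData k where
  Obj := twObj D
  Hom X Y g := D.Hom X.1 Y.1 g
  homAdd _ _ _ := inferInstance
  homMod _ _ _ := inferInstance
  d := fun {X Y g} α =>
    D.cast (by ring) (D.comp Y.2.1 α) + D.d α +
      ((-1 : k) ^ (g + 1)) • D.cast (by ring) (D.comp α X.2.1)
  comp := fun {X Y Z g h} β α => D.comp β α
  id X := D.id X.1

end P

namespace P

variable {k : Type} [Field k]

/-- A twisted complex over `(A^[•])^⊕` is *one-sided* if its Maurer-Cartan
matrix `q` is (strictly) triangular: `q j i = 0` whenever `j ≤ i`, where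
`q j i` denotes the entry with source the `i`-th summand and target the `j`-th
summand. -/
def OneSided {D : DGData k} (X : twObj (matData (trData D))) : Prop :=
  ∀ j i : Fin X.1.1, (j : ℕ) ≤ (i : ℕ) → X.2.1 j i = 0

/-- Objects of the pretriangulated hull: one-sided twisted complexes. -/
def pretrObj (D : DGData k) : Type _ := {X : twObj (matData (trData D)) // OneSided X}

/-- The pretriangulated hull `pretr(A)`, as the full dg subcategory of
`Twist((A^[•])^⊕)` on the one-sided twisted complexes. -/
def pretrData (D : DGData k) : DGData k where
  Obj := pretrObj D
  Hom X Y g := (twData (matData (trData D))).Hom X.1 Y.1 g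
  homAdd X Y g := (twData (matData (trData D))).homAdd X.1 Y.1 g
  homMod X Y g := (twData (matData (trData D))).homMod X.1 Y.1 g
  d := fun {X Y g} x => (twData (matData (trData D))).d (A := X.1) (B := Y.1) x
  comp := fun {X Y Z g h} y x =>
    (twData (matData (trData D))).comp (A := X.1) (B := Y.1) (C := Z.1) y x
  id X := (twData (matData (trData D))).id X.1

end P

namespace P

section Statement9

variable {k : Type} [Field k]

instance matHomAdd (D : DGData k) (A B : matObj D) (i : ℤ) :
    AddCommGroup ((matData D).Hom A B i) := (matData D).homAdd A B i

instance matHomMod (D : DGData k) (A B : matObj D) (i : ℤ) :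
    Module k ((matData D).Hom A B i) := (matData D).homMod A B i

instance twHomAdd (D : DGData k) (A B : twObj D) (i : ℤ) :
    AddCommGroup ((twData D).Hom A B i) := (twData D).homAdd A B i

/-- Objects of the dg category `Ch^b_dg(A)` of bounded complexes whose objects
are formal finite direct sums of objects of `A`. -/
structure ChbObj (D : DGData k) where
  X : ℤ → matObj D
  dd : ∀ i : ℤ, (matData D).Hom (X i) (X (i + 1)) 0
  dd_sq : ∀ i : ℤ, (matData D).comp (dd (i + 1)) (dd i) = 0
  bounded : ∃ N : ℕ, ∀ i : ℤ, (i < -(N : ℤ) ∨ (N : ℤ) < i) → (X i).1 = 0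

/-- The dg category `Ch^b_dg(A)`: hom-complexes
`(X,Y)^g = Π_i Hom(X^i, Y^{i+g})` with differential
`d(α) = d_Y ∘ α - (-1)^g α ∘ d_X`. -/
def chbData (D : DGData k) : DGData k where
  Obj := ChbObj D
  Hom X Y g := ∀ i : ℤ, (matData D).Hom (X.X i) (Y.X (i + g)) 0
  homAdd _ _ _ := inferInstance
  homMod _ _ _ := inferInstance
  d := fun {X Y g} α => fun i =>
    (matData D).hcast rfl (congrArg Y.X (by ring)) (by norm_num)
      ((matData D).comp (Y.dd (i + g)) (α i)) -
    ((-1 : k) ^ g) •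
      (matData D).hcast rfl (congrArg Y.X (by ring)) (by norm_num)
        ((matData D).comp (α (i + 1)) (X.dd i))
  comp := fun {X Y Z g h} β α => fun i =>
    (matData D).hcast rfl (congrArg Z.X (by ring)) (by norm_num)
      ((matData D).comp (β (i + g)) (α i))
  id X := fun i =>
    (matData D).hcast rfl (congrArg X.X (show i = i + 0 by ring)) rfl
      ((matData D).id (X.X i))

/-- The data of a dg functor. -/
structure DGFunData (D E : DGData k) where
  obj : D.Obj → E.Obj
  map : ∀ {A B : D.Obj} {g : ℤ}, D.Hom A B g → E.Hom (obj A) (obj B) g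

/-- The axioms of a dg functor. -/
structure IsDGFun {D E : DGData k} (F : DGFunData D E) : Prop where
  map_add : ∀ {A B : D.Obj} {g : ℤ} (x y : D.Hom A B g),
      F.map (x + y) = F.map x + F.map y
  map_smul : ∀ {A B : D.Obj} {g : ℤ} (c : k) (x : D.Hom A B g),
      F.map (c • x) = c • F.map x
  map_d : ∀ {A B : D.Obj} {g : ℤ} (x : D.Hom A B g), F.map (D.d x) = E.d (F.map x)
  map_comp : ∀ {A B C : D.Obj} {g h : ℤ} (y : D.Hom B C h) (x : D.Hom A B g),
      F.map (D.comp y x) = E.comp (F.map y) (F.map x)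
  map_id : ∀ A : D.Obj, F.map (D.id A) = E.id (F.obj A)

/-- A dg functor is an equivalence of dg categories if it is fully faithful
(in each degree) and every object of the target is connected to an object in
the image by a closed degree-0 isomorphism. -/
def IsDGEquivalence {D E : DGData k} (F : DGFunData D E) : Prop :=
  IsDGFun F ∧
  (∀ (A B : D.Obj) (g : ℤ), Function.Bijective (fun x : D.Hom A B g => F.map x)) ∧
  (∀ Y : E.Obj, ∃ (X : D.Obj) (u : E.Hom (F.obj X) Y 0) (v : E.Hom Y (F.obj X) 0),
    E.d u = 0 ∧ E.d v = 0 ∧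
    E.cast (by norm_num) (E.comp u v) = E.id Y ∧
    E.cast (by norm_num) (E.comp v u) = E.id (F.obj X))

/-- The inclusion `pretr(A) ⊆ Twist((A^[•])^⊕)`. -/
def pretrIncl (D : DGData k) : DGFunData (pretrData D) (twData (matData (trData D))) where
  obj X := X.1
  map := fun {A B g} x => x

/-- The permutation matrix associated to a permutation of the summands. -/
def permMat (D : DGData k) (M : matObj (trData D)) (σ : Equiv.Perm (Fin M.1)) :
    (matData (trData D)).Hom M ⟨M.1, fun r => M.2 (σ r)⟩ 0 := fun j i =>
  if h : σ j = i then
    (trData D).hcast rfl (congrArg M.2 h.symm) rfl ((trData D).id (M.2 i))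
  else 0


/-! ### Helper material -/

lemma cast_rfl' (D : DGData k) {A B : D.Obj} {i : ℤ} (h : i = i) (x : D.Hom A B i) :
    D.cast h x = x := rfl

lemma cast_cast' (D : DGData k) {A B : D.Obj} {i j l : ℤ} (h : i = j) (h' : j = l)
    (x : D.Hom A B i) : D.cast h' (D.cast h x) = D.cast (h.trans h') x := by
  subst h; subst h'; rfl

lemma comp_cast_left (D : DGData k) {A B C : D.Obj} {i j j' : ℤ} (h : j = j')
    (y : D.Hom B C j) (x : D.Hom A B i) :
    D.comp (D.cast h y) x = D.cast (by rw [h]) (D.comp y x) := by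
  subst h; rfl

lemma comp_cast_right (D : DGData k) {A B C : D.Obj} {i i' j : ℤ} (h : i = i')
    (y : D.Hom B C j) (x : D.Hom A B i) :
    D.comp y (D.cast h x) = D.cast (by rw [h]) (D.comp y x) := by
  subst h; rfl

lemma cast_add' (D : DGData k) {A B : D.Obj} {i j : ℤ} (h : i = j) (x y : D.Hom A B i) :
    D.cast h (x + y) = D.cast h x + D.cast h y := by subst h; rfl

lemma cast_smul' (D : DGData k) {A B : D.Obj} {i j : ℤ} (h : i = j) (c : k)
    (x : D.Hom A B i) : D.cast h (c • x) = c • D.cast h x := by subst h; rfl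

lemma cast_zero' (D : DGData k) {A B : D.Obj} {i j : ℤ} (h : i = j) :
    D.cast h (0 : D.Hom A B i) = 0 := by subst h; rfl

lemma cast_sum' (D : DGData k) {A B : D.Obj} {i j : ℤ} (h : i = j) {ι : Type} (s : Finset ι)
    (f : ι → D.Hom A B i) : D.cast h (∑ t ∈ s, f t) = ∑ t ∈ s, D.cast h (f t) := by
  subst h; rfl

lemma comp_zero_left {D : DGData k} (hD : IsDGCat D) {A B C : D.Obj} {i j : ℤ}
    (x : D.Hom A B i) : D.comp (0 : D.Hom B C j) x = 0 := by
  have := hD.comp_smul_left (0 : k) (0 : D.Hom B C j) x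
  simpa using this

lemma comp_zero_right {D : DGData k} (hD : IsDGCat D) {A B C : D.Obj} {i j : ℤ}
    (y : D.Hom B C j) : D.comp y (0 : D.Hom A B i) = 0 := by
  have := hD.comp_smul_right (0 : k) y (0 : D.Hom A B i)
  simpa using this

/-- The hom-spaces are concentrated in degree `0`. -/
def Conc (D : DGData k) : Prop :=
  ∀ {A B : D.Obj} (i : ℤ), i ≠ 0 → ∀ x : D.Hom A B i, x = 0

lemma d_eq_zero {D : DGData k} (hD : IsDGCat D) (hc : Conc D) {A B : D.Obj} {i : ℤ}
    (x : D.Hom A B i) : D.d x = 0 := by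
  by_cases h : i + 1 = 0
  · have hx : x = 0 := hc i (by omega) x
    have := hD.d_smul (0 : k) x
    simpa [hx] using this
  · exact hc _ h _

/-- The degree `0` value of a homogeneous morphism (zero if the degree is not `0`). -/
def val {D : DGData k} {A B : D.Obj} {e : ℤ} (x : D.Hom A B e) : D.Hom A B 0 :=
  if h : e = 0 then D.cast h x else 0

/-- Composition of degree `0` morphisms. -/
def c0 {D : DGData k} {A B C : D.Obj} (y : D.Hom B C 0) (x : D.Hom A B 0) : D.Hom A C 0 :=
  D.cast (zero_add 0) (D.comp y x)

section basic
variable {D : DGData k} {A B C E : D.Obj}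

lemma val_self (x : D.Hom A B 0) : val x = x := by simp [val, cast_rfl']

lemma val_of_ne {e : ℤ} (h : e ≠ 0) (x : D.Hom A B e) : val x = 0 := by simp [val, h]

lemma val_cast {e e' : ℤ} (h : e = e') (x : D.Hom A B e) : val (D.cast h x) = val x := by
  subst h; rfl

lemma val_add {e : ℤ} (x y : D.Hom A B e) : val (x + y) = val x + val y := by
  unfold val; split_ifs
  · exact cast_add' ..
  · simp

lemma val_smul {e : ℤ} (c : k) (x : D.Hom A B e) : val (c • x) = c • val x := by
  unfold val; split_ifs
  · exact cast_smul' ..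
  · simp

lemma val_zero {e : ℤ} : val (0 : D.Hom A B e) = 0 := by
  unfold val; split_ifs
  · exact cast_zero' ..
  · rfl

lemma val_sum {e : ℤ} {ι : Type} (s : Finset ι) (f : ι → D.Hom A B e) :
    val (∑ t ∈ s, f t) = ∑ t ∈ s, val (f t) := by
  unfold val; split_ifs
  · exact cast_sum' ..
  · simp

lemma val_inj (hc : Conc D) {e : ℤ} {x y : D.Hom A B e} (h : val x = val y) : x = y := by
  by_cases he : e = 0
  · subst he; rwa [val_self, val_self] at h
  · rw [hc e he x, hc e he y]

lemma val_comp (hD : IsDGCat D) (hc : Conc D) {i j : ℤ} (y : D.Hom B C j) (x : D.Hom A B i) :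
    val (D.comp y x) = c0 (val y) (val x) := by
  by_cases hj : j = 0
  · subst hj
    by_cases hi : i = 0
    · subst hi
      rw [val_self x, val_self y, c0, ← val_cast (zero_add 0), val_self]
    · rw [hc i hi x, comp_zero_right hD, val_zero, val_zero, c0, comp_zero_right hD, cast_zero']
  · rw [hc j hj y, comp_zero_left hD, val_zero, val_zero, c0, comp_zero_left hD, cast_zero']

lemma c0_zero_left (hD : IsDGCat D) (x : D.Hom A B 0) : c0 (0 : D.Hom B C 0) x = 0 := by
  rw [c0, comp_zero_left hD, cast_zero']

lemma c0_zero_right (hD : IsDGCat D) (y : D.Hom B C 0) : c0 y (0 : D.Hom A B 0) = 0 := by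
  rw [c0, comp_zero_right hD, cast_zero']

lemma c0_add_left (hD : IsDGCat D) (y y' : D.Hom B C 0) (x : D.Hom A B 0) :
    c0 (y + y') x = c0 y x + c0 y' x := by
  rw [c0, hD.comp_add_left, cast_add']; rfl

lemma c0_add_right (hD : IsDGCat D) (y : D.Hom B C 0) (x x' : D.Hom A B 0) :
    c0 y (x + x') = c0 y x + c0 y x' := by
  rw [c0, hD.comp_add_right, cast_add']; rfl

lemma c0_smul_left (hD : IsDGCat D) (c : k) (y : D.Hom B C 0) (x : D.Hom A B 0) :
    c0 (c • y) x = c • c0 y x := by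
  rw [c0, hD.comp_smul_left, cast_smul']; rfl

lemma c0_smul_right (hD : IsDGCat D) (c : k) (y : D.Hom B C 0) (x : D.Hom A B 0) :
    c0 y (c • x) = c • c0 y x := by
  rw [c0, hD.comp_smul_right, cast_smul']; rfl

lemma c0_assoc (hD : IsDGCat D) (z : D.Hom C E 0) (y : D.Hom B C 0) (x : D.Hom A B 0) :
    c0 z (c0 y x) = c0 (c0 z y) x := by
  simp only [c0, comp_cast_left, comp_cast_right, cast_cast', hD.assoc]

lemma c0_id (hD : IsDGCat D) (x : D.Hom A B 0) : c0 x (D.id A) = x := hD.comp_id x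

lemma id_c0 (hD : IsDGCat D) (x : D.Hom A B 0) : c0 (D.id B) x = x := hD.id_comp x

lemma c0_sum_left (hD : IsDGCat D) {ι : Type} (s : Finset ι) (f : ι → D.Hom B C 0)
    (x : D.Hom A B 0) : c0 (∑ t ∈ s, f t) x = ∑ t ∈ s, c0 (f t) x := by
  classical
  induction s using Finset.induction_on with
  | empty => simp [c0_zero_left hD]
  | insert a s ha ih => rw [Finset.sum_insert ha, Finset.sum_insert ha, c0_add_left hD, ih]

lemma c0_sum_right (hD : IsDGCat D) {ι : Type} (s : Finset ι) (f : ι → D.Hom A B 0)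
    (y : D.Hom B C 0) : c0 y (∑ t ∈ s, f t) = ∑ t ∈ s, c0 y (f t) := by
  classical
  induction s using Finset.induction_on with
  | empty => simp [c0_zero_right hD]
  | insert a s ha ih => rw [Finset.sum_insert ha, Finset.sum_insert ha, c0_add_right hD, ih]

end basic

/-- A finite graded family of objects. -/
structure GFam (D : DGData k) where
  I : Type
  fin : Fintype I
  X : I → D.Obj
  deg : I → ℤ

attribute [instance] GFam.fin

/-- Matrices of degree `0` morphisms. -/
abbrev GMat {D : DGData k} (A B : GFam D) : Type _ :=
  ∀ (j : B.I) (i : A.I), D.Hom (A.X i) (B.X j) 0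

/-- Matrix product. -/
def gmul {D : DGData k} {A B C : GFam D} (N : GMat B C) (M : GMat A B) : GMat A C :=
  fun l i => ∑ j, c0 (N l j) (M j i)

open Classical in
/-- Identity matrix. -/
noncomputable def gone {D : DGData k} (A : GFam D) : GMat A A :=
  fun j i => if h : i = j then D.hcast rfl (congrArg A.X h) rfl (D.id (A.X i)) else 0

/-- Homogeneous matrices. -/
def Homog {D : DGData k} {A B : GFam D} (g : ℤ) (M : GMat A B) : Prop :=
  ∀ j i, B.deg j ≠ A.deg i + g → M j i = 0

section mat
variable {D : DGData k} {A B C E : GFam D}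

lemma gmul_assoc (hD : IsDGCat D) (P : GMat C E) (N : GMat B C) (M : GMat A B) :
    gmul P (gmul N M) = gmul (gmul P N) M := by
  funext l i
  simp only [gmul, c0_sum_left hD, c0_sum_right hD, c0_assoc hD]
  exact Finset.sum_comm

lemma gmul_add (hD : IsDGCat D) (N : GMat B C) (M M' : GMat A B) :
    gmul N (M + M') = gmul N M + gmul N M' := by
  funext l i
  simp [gmul, c0_add_right hD, Finset.sum_add_distrib]

lemma add_gmul (hD : IsDGCat D) (N N' : GMat B C) (M : GMat A B) :
    gmul (N + N') M = gmul N M + gmul N' M := by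
  funext l i
  simp [gmul, c0_add_left hD, Finset.sum_add_distrib]

lemma gmul_smul (hD : IsDGCat D) (c : k) (N : GMat B C) (M : GMat A B) :
    gmul N (c • M) = c • gmul N M := by
  funext l i
  simp [gmul, c0_smul_right hD, Finset.smul_sum]

lemma smul_gmul (hD : IsDGCat D) (c : k) (N : GMat B C) (M : GMat A B) :
    gmul (c • N) M = c • gmul N M := by
  funext l i
  simp [gmul, c0_smul_left hD, Finset.smul_sum]

lemma gmul_sub (hD : IsDGCat D) (N : GMat B C) (M M' : GMat A B) :
    gmul N (M - M') = gmul N M - gmul N M' := by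
  rw [eq_sub_iff_add_eq, ← gmul_add hD, sub_add_cancel]

lemma sub_gmul (hD : IsDGCat D) (N N' : GMat B C) (M : GMat A B) :
    gmul (N - N') M = gmul N M - gmul N' M := by
  rw [eq_sub_iff_add_eq, ← add_gmul hD, sub_add_cancel]

lemma gmul_gone (hD : IsDGCat D) (M : GMat A B) : gmul M (gone A) = M := by
  funext l i
  simp only [gmul]
  rw [Finset.sum_eq_single i]
  · simp only [gone, dif_pos]
    exact c0_id hD _
  · intro b _ hb
    simp [gone, Ne.symm hb, c0_zero_right hD]
  · simp

lemma gone_gmul (hD : IsDGCat D) (M : GMat A B) : gmul (gone B) M = M := by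
  funext l i
  simp only [gmul]
  rw [Finset.sum_eq_single l]
  · simp only [gone, dif_pos]
    exact id_c0 hD _
  · intro b _ hb
    simp [gone, hb, c0_zero_left hD]
  · simp

lemma Homog.gmul (hD : IsDGCat D) {g h : ℤ} {N : GMat B C} {M : GMat A B} (hN : Homog h N)
    (hM : Homog g M) : Homog (h + g) (P.gmul N M) := by
  intro l i hli
  refine Finset.sum_eq_zero fun j _ => ?_
  by_cases hj : B.deg j = A.deg i + g
  · rw [hN l j (by omega), c0_zero_left hD]
  · rw [hM j i hj, c0_zero_right hD]

end mat

/-- Graded families with a square zero endomorphism of degree `1`. -/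
structure GObj (D : DGData k) extends GFam D where
  p : GMat toGFam toGFam
  hp : Homog 1 p
  hpp : gmul p p = 0

/-- Degree `0` isomorphisms compatible with the endomorphisms `p`. -/
structure GIso {D : DGData k} (A B : GObj D) where
  u : GMat A.toGFam B.toGFam
  v : GMat B.toGFam A.toGFam
  hu : Homog 0 u
  hv : Homog 0 v
  uv : gmul u v = gone _
  vu : gmul v u = gone _
  pu : gmul B.p u = gmul u A.p
  pv : gmul A.p v = gmul v B.p

def GIso.symm {D : DGData k} {A B : GObj D} (e : GIso A B) : GIso B A :=
  ⟨e.v, e.u, e.hv, e.hu, e.vu, e.uv, e.pv, e.pu⟩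

def GIso.trans {D : DGData k} (hD : IsDGCat D) {A B C : GObj D} (e : GIso A B) (f : GIso B C) :
    GIso A C where
  u := gmul f.u e.u
  v := gmul e.v f.v
  hu := by simpa using f.hu.gmul hD e.hu
  hv := by simpa using e.hv.gmul hD f.hv
  uv := by
    rw [gmul_assoc hD, ← gmul_assoc hD f.u, e.uv, gmul_gone hD, f.uv]
  vu := by
    rw [gmul_assoc hD, ← gmul_assoc hD e.v, f.vu, gmul_gone hD, e.vu]
  pu := by rw [gmul_assoc hD, f.pu, ← gmul_assoc hD, e.pu, gmul_assoc hD]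
  pv := by rw [gmul_assoc hD, e.pv, ← gmul_assoc hD, f.pv, gmul_assoc hD]

open Classical in
/-- The permutation matrix of a reindexing. -/
noncomputable def reV {D : DGData k} (A B : GFam D) (f : B.I ≃ A.I)
    (hX : ∀ r, A.X (f r) = B.X r) : GMat A B :=
  fun j i => if h : f j = i then D.hcast rfl ((congrArg A.X h.symm).trans (hX j)) rfl
    (D.id (A.X i)) else 0

open Classical in
/-- The inverse permutation matrix of a reindexing. -/
noncomputable def reU {D : DGData k} (A B : GFam D) (f : B.I ≃ A.I)
    (hX : ∀ r, A.X (f r) = B.X r) : GMat B A :=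
  fun i j => if h : f j = i then D.hcast ((congrArg A.X h.symm).trans (hX j)) rfl rfl
    (D.id (A.X i)) else 0

section re
variable {D : DGData k} {A B C : GFam D} (f : B.I ≃ A.I) (hX : ∀ r, A.X (f r) = B.X r)

lemma c0_hcast_id (hD : IsDGCat D) {A B C : D.Obj} (h : B = C) (x : D.Hom A B 0) :
    c0 (D.hcast rfl h rfl (D.id B)) x = D.hcast rfl h rfl x := by
  subst h; exact id_c0 hD x

lemma c0_hcast_id' (hD : IsDGCat D) {A B C : D.Obj} (h : B = C) (x : D.Hom A B 0) :
    c0 (D.hcast h rfl rfl (D.id B)) (D.hcast rfl h rfl x) = x := by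
  subst h; exact id_c0 hD x

lemma id_hcast_c0 (hD : IsDGCat D) {A B C : D.Obj} (h : A = C) (x : D.Hom A B 0) :
    c0 x (D.hcast h rfl rfl (D.id A)) = D.hcast h rfl rfl x := by
  subst h; exact c0_id hD x

lemma id_hcast_c0' (hD : IsDGCat D) {A B C : D.Obj} (h : A = C) (x : D.Hom A B 0) :
    c0 (D.hcast h rfl rfl x) (D.hcast rfl h rfl (D.id A)) = x := by
  subst h; exact c0_id hD x

lemma reV_gmul (hD : IsDGCat D) (M : GMat C A) :
    gmul (reV A B f hX) M = fun j i => D.hcast rfl (hX j) rfl (M (f j) i) := by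
  funext j i
  simp only [gmul]
  rw [Finset.sum_eq_single (f j)]
  · simp only [reV, dif_pos]; exact c0_hcast_id hD _ _
  · intro b _ hb; simp [reV, Ne.symm hb, c0_zero_left hD]
  · simp

lemma gmul_reV (hD : IsDGCat D) (M : GMat B C) :
    gmul M (reV A B f hX) = fun j i => D.hcast ((hX _).symm.trans
      (congrArg A.X (f.apply_symm_apply i))) rfl rfl (M j (f.symm i)) := by
  funext j i
  obtain ⟨r, rfl⟩ := f.surjective i
  simp only [gmul]
  rw [Finset.sum_eq_single r]
  · simp only [reV, dif_pos]
    have key : ∀ (X : D.Obj) (h : A.X (f r) = X) (x : D.Hom X (C.X j) 0),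
        c0 x (D.hcast rfl h rfl (D.id (A.X (f r)))) = D.hcast h.symm rfl rfl x := by
      intro X h x; subst h; exact c0_id hD x
    rw [key]
    have key2 : ∀ (r' : B.I) (e : r' = r) (h1 : B.X r' = A.X (f r)) (h2 : B.X r = A.X (f r)),
        D.hcast h2 rfl rfl (M j r) = D.hcast h1 rfl rfl (M j r') := by
      intro r' e h1 h2; subst e; rfl
    exact key2 _ (f.symm_apply_apply r) _ _
  · intro b _ hb
    have : f b ≠ f r := fun h => hb (f.injective h)
    simp [reV, this, c0_zero_right hD]
  · simp

lemma reU_gmul_reV (hD : IsDGCat D) : gmul (reU A B f hX) (reV A B f hX) = gone A := by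
  rw [gmul_reV f hX hD]
  funext j i
  obtain ⟨r, rfl⟩ := f.surjective i
  have key2 : ∀ (r' : B.I) (e : r' = r) (h1 : B.X r' = A.X (f r)),
      D.hcast h1 rfl rfl (reU A B f hX j r') = gone A j (f r) := by
    intro r' e h1
    subst e
    unfold reU gone
    split_ifs with h
    · subst h
      generalize_proofs h3
      have : ∀ (X : D.Obj) (h : A.X (f r') = X) (h' : X = A.X (f r')) (x : D.Hom (A.X (f r')) (A.X (f r')) 0),
        D.hcast h' rfl rfl (D.hcast h rfl rfl x) = x := by intro X h h' x; subst h; rfl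
      exact this _ _ _ _
    · generalize B.X r' = Y at h1
      subst h1; rfl
  exact key2 _ (f.symm_apply_apply r) _

lemma reV_gmul_reU (hD : IsDGCat D) : gmul (reV A B f hX) (reU A B f hX) = gone B := by
  rw [reV_gmul f hX hD]
  funext j i
  unfold reU gone
  by_cases h : i = j
  · subst h
    simp only [dif_pos]
    have : ∀ (X : D.Obj) (h : A.X (f i) = X),
        D.hcast rfl h rfl (D.hcast h rfl rfl (D.id (A.X (f i)))) = D.id X := by
      intro X h; subst h; rfl
    exact this _ _
  · rw [dif_neg h, dif_neg (fun h' => h (f.injective h'))]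
    have : ∀ (X : D.Obj) (h : A.X (f j) = X),
        D.hcast rfl h rfl (0 : D.Hom (B.X i) (A.X (f j)) 0) = 0 := by
      intro X h; subst h; rfl
    exact this _ _

end re

/-- The isomorphism attached to a reindexing. -/
noncomputable def reIso {D : DGData k} (hD : IsDGCat D) (A B : GObj D) (f : B.I ≃ A.I)
    (hX : ∀ r, A.X (f r) = B.X r) (hdeg : ∀ r, A.deg (f r) = B.deg r)
    (hp : ∀ j i, B.p j i = D.hcast (hX i) (hX j) rfl (A.p (f j) (f i))) : GIso A B :=
  have pu : gmul B.p (reV A.toGFam B.toGFam f hX) = gmul (reV A.toGFam B.toGFam f hX) A.p := by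
    rw [reV_gmul f hX hD, gmul_reV f hX hD]
    funext j i
    obtain ⟨r, rfl⟩ := f.surjective i
    have key2 : ∀ (r' : B.I) (e : r' = r) (h1 : B.X r' = A.X (f r)),
        D.hcast h1 rfl rfl (B.p j r') = D.hcast rfl (hX j) rfl (A.p (f j) (f r)) := by
      intro r' e h1
      subst e
      rw [hp]
      have : ∀ (X Y : D.Obj) (h : A.X (f r') = X) (h2 : A.X (f j) = Y) (h' : X = A.X (f r'))
          (x : D.Hom (A.X (f r')) (A.X (f j)) 0),
        D.hcast h' rfl rfl (D.hcast h h2 rfl x) = D.hcast rfl h2 rfl x := by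
        intro X Y h h2 h' x; subst h; subst h2; rfl
      exact this _ _ _ _ _ _
    exact key2 _ (f.symm_apply_apply r) _
  { u := reV A.toGFam B.toGFam f hX
    v := reU A.toGFam B.toGFam f hX
    hu := by
      intro j i h
      unfold reV
      rw [dif_neg]; rintro rfl
      exact h (by rw [hdeg]; simp)
    hv := by
      intro i j h
      unfold reU
      rw [dif_neg]; rintro rfl
      exact h (by rw [hdeg]; simp)
    uv := reV_gmul_reU f hX hD
    vu := reU_gmul_reV f hX hD
    pu := pu
    pv := by
      have h1 := congrArg (fun M => gmul (reU A.toGFam B.toGFam f hX)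
        (gmul M (reU A.toGFam B.toGFam f hX))) pu
      rw [← gmul_assoc hD B.p, reV_gmul_reU f hX hD, gmul_gone hD, ← gmul_assoc hD (reV _ _ _ _),
        gmul_assoc hD (reU _ _ _ _) (reV _ _ _ _), reU_gmul_reV f hX hD, gone_gmul hD] at h1
      exact h1.symm }

/-- A full embedding of a dg category into graded families with endomorphism. -/
structure Ev (D : DGData k) (K : DGData k) where
  o : K.Obj → GObj D
  ev : ∀ {X Y : K.Obj} {g : ℤ}, K.Hom X Y g → GMat (o X).toGFam (o Y).toGFam
  add : ∀ {X Y : K.Obj} {g : ℤ} (x y : K.Hom X Y g), ev (x + y) = ev x + ev y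
  smul : ∀ {X Y : K.Obj} {g : ℤ} (c : k) (x : K.Hom X Y g), ev (c • x) = c • ev x
  comp : ∀ {X Y Z : K.Obj} {g h : ℤ} (y : K.Hom Y Z h) (x : K.Hom X Y g),
    ev (K.comp y x) = gmul (ev y) (ev x)
  id : ∀ X : K.Obj, ev (K.id X) = gone _
  d : ∀ {X Y : K.Obj} {g : ℤ} (x : K.Hom X Y g),
    ev (K.d x) = gmul (o Y).p (ev x) - ((-1 : k) ^ g) • gmul (ev x) (o X).p
  inj : ∀ {X Y : K.Obj} {g : ℤ} {x y : K.Hom X Y g}, ev x = ev y → x = y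
  homog : ∀ {X Y : K.Obj} {g : ℤ} (x : K.Hom X Y g), Homog g (ev x)
  surj : ∀ {X Y : K.Obj} {g : ℤ} (M : GMat (o X).toGFam (o Y).toGFam), Homog g M →
    ∃ x : K.Hom X Y g, ev x = M

lemma Ev.cast {D K : DGData k} (S : Ev D K) {X Y : K.Obj} {g g' : ℤ} (h : g = g')
    (x : K.Hom X Y g) : S.ev (K.cast h x) = S.ev x := by subst h; rfl

lemma Ev.zero {D K : DGData k} (S : Ev D K) {X Y : K.Obj} {g : ℤ} :
    S.ev (0 : K.Hom X Y g) = 0 := by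
  have := S.smul (0 : k) (0 : K.Hom X Y g)
  simpa using this

/-- Lift a `GIso` to an isomorphism. -/
lemma Ev.lift {D K : DGData k} (S : Ev D K) {X Y : K.Obj} (e : GIso (S.o X) (S.o Y)) :
    ∃ (u : K.Hom X Y 0) (v : K.Hom Y X 0), S.ev u = e.u ∧ S.ev v = e.v ∧
    K.d u = 0 ∧ K.d v = 0 ∧
    K.cast (by norm_num) (K.comp u v) = K.id Y ∧
    K.cast (by norm_num) (K.comp v u) = K.id X := by
  obtain ⟨u, hu⟩ := S.surj e.u e.hu
  obtain ⟨v, hv⟩ := S.surj e.v e.hv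
  refine ⟨u, v, hu, hv, S.inj ?_, S.inj ?_, S.inj ?_, S.inj ?_⟩
  · rw [S.d, hu, S.zero, e.pu]; simp
  · rw [S.d, hv, S.zero, e.pv]; simp
  · rw [S.cast, S.comp, hu, hv, e.uv, S.id]
  · rw [S.cast, S.comp, hu, hv, e.vu, S.id]

/-- Essential surjectivity. -/
def Ev.Ess {D K : DGData k} (S : Ev D K) : Prop :=
  ∀ A : GObj D, ∃ X : K.Obj, Nonempty (GIso A (S.o X))

theorem Ev.equiv {D K L : DGData k} (hD : IsDGCat D) (S : Ev D K) (T : Ev D L) (hS : S.Ess)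
    (hT : T.Ess) : ∃ G : DGFunData K L, IsDGEquivalence G := by
  choose F hF using fun X => hT (S.o X)
  let e : ∀ X, GIso (S.o X) (T.o (F X)) := fun X => (hF X).some
  have hom : ∀ {X Y : K.Obj} {g : ℤ} (x : K.Hom X Y g),
      Homog g (gmul (e Y).u (gmul (S.ev x) (e X).v)) := by
    intro X Y g x
    have := (e Y).hu.gmul hD ((S.homog x).gmul hD (e X).hv)
    simpa using this
  let m : ∀ {X Y : K.Obj} {g : ℤ}, K.Hom X Y g → L.Hom (F X) (F Y) g := fun x =>
    (T.surj _ (hom x)).choose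
  have hm : ∀ {X Y : K.Obj} {g : ℤ} (x : K.Hom X Y g),
      T.ev (m x) = gmul (e Y).u (gmul (S.ev x) (e X).v) := fun x =>
    (T.surj _ (hom x)).choose_spec
  refine ⟨⟨F, m⟩, ⟨?_, ?_, ?_, ?_, ?_⟩, ?_, ?_⟩
  · intro X Y g x y
    apply T.inj
    rw [hm, T.add, hm, hm, S.add, add_gmul hD, gmul_add hD]
  · intro X Y g c x
    apply T.inj
    rw [hm, T.smul, hm, S.smul, smul_gmul hD, gmul_smul hD]
  · intro X Y g x
    apply T.inj
    rw [hm, T.d, hm, S.d, sub_gmul hD, gmul_sub hD, smul_gmul hD, gmul_smul hD]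
    congr 1
    · rw [gmul_assoc hD _ (e Y).u, (e Y).pu]; simp only [gmul_assoc hD]
    · congr 1
      simp only [← gmul_assoc hD]; rw [(e X).pv]
  · intro X Y Z g h y x
    apply T.inj
    rw [hm, T.comp, hm, hm, S.comp]
    simp only [← gmul_assoc hD]
    rw [gmul_assoc hD (e Y).v, (e Y).vu, gone_gmul hD]
  · intro X
    apply T.inj
    rw [hm, S.id, T.id, gone_gmul hD, (e X).uv]
  · intro X Y g
    constructor
    · intro x y hxy
      have h1 : T.ev (m x) = T.ev (m y) := congrArg T.ev hxy
      rw [hm, hm] at h1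
      have h2 := congrArg (fun M => gmul (gmul (e Y).v M) (e X).u) h1
      simp only [gmul_assoc hD, (e Y).vu, gone_gmul hD] at h2
      simp only [← gmul_assoc hD, (e X).vu, gmul_gone hD] at h2
      exact S.inj h2
    · intro y
      have hh : Homog g (gmul (e Y).v (gmul (T.ev y) (e X).u)) := by
        have := (e Y).hv.gmul hD ((T.homog y).gmul hD (e X).hu)
        simpa using this
      obtain ⟨x, hx⟩ := S.surj _ hh
      refine ⟨x, T.inj ?_⟩
      show T.ev (m x) = T.ev y
      rw [hm, hx]
      simp only [gmul_assoc hD]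
      rw [(e Y).uv, gone_gmul hD, ← gmul_assoc hD, (e X).uv, gmul_gone hD]
  · intro Y
    obtain ⟨X, ⟨i⟩⟩ := hS (T.o Y)
    obtain ⟨u, v, -, -, h⟩ := T.lift (X := F X) (Y := Y) ((e X).symm.trans hD i.symm)
    exact ⟨X, u, v, h⟩


/-! ### Evaluation of the twisted complexes -/

/-- The graded family underlying an object of `(A^[•])^⊕`. -/
def twFam {D : DGData k} (M : matObj (trData D)) : GFam D :=
  ⟨Fin M.1, inferInstance, fun r => (M.2 r).1, fun r => -(M.2 r).2⟩

/-- The matrix of values of a morphism in `(A^[•])^⊕`. -/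
def mev {D : DGData k} {M N : matObj (trData D)} {g : ℤ}
    (α : (matData (trData D)).Hom M N g) : GMat (twFam M) (twFam N) := fun j i =>
  val (D := D) (A := (M.2 i).1) (B := (N.2 j).1) (e := g - (M.2 i).2 + (N.2 j).2) (α j i)

section mev
variable {D : DGData k} {M N O : matObj (trData D)}

lemma mev_add {g : ℤ} (x y : (matData (trData D)).Hom M N g) :
    mev (x + y) = mev x + mev y := by
  funext j i; exact val_add _ _

lemma mev_smul {g : ℤ} (c : k) (x : (matData (trData D)).Hom M N g) :
    mev (c • x) = c • mev x := by
  funext j i; exact val_smul _ _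

lemma mev_zero {g : ℤ} : mev (0 : (matData (trData D)).Hom M N g) = 0 := by
  funext j i; exact val_zero

lemma mev_cast {g g' : ℤ} (h : g = g') (x : (matData (trData D)).Hom M N g) :
    mev ((matData (trData D)).cast h x) = mev x := by
  subst h; rfl

/-- The value of an entry of a morphism in `(A^[•])^⊕`. -/
def tval {X Y : (trData D).Obj} {g : ℤ} (x : (trData D).Hom X Y g) : D.Hom X.1 Y.1 0 :=
  val (D := D) (A := X.1) (B := Y.1) (e := g - X.2 + Y.2) x

lemma tval_zero {X Y : (trData D).Obj} {g : ℤ} : tval (0 : (trData D).Hom X Y g) = 0 := val_zero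

lemma tval_sum {X Y : (trData D).Obj} {g : ℤ} {ι : Type} (s : Finset ι)
    (f : ι → (trData D).Hom X Y g) : tval (∑ t ∈ s, f t) = ∑ t ∈ s, tval (f t) :=
  val_sum (D := D) (A := X.1) (B := Y.1) s f

lemma tval_comp (hD : IsDGCat D) (hc : Conc D) {X Y Z : (trData D).Obj} {g h : ℤ}
    (y : (trData D).Hom Y Z h) (x : (trData D).Hom X Y g) :
    tval ((trData D).comp y x) = c0 (tval y) (tval x) :=
  (val_cast _ _).trans (val_comp hD hc _ _)

lemma mev_comp (hD : IsDGCat D) (hc : Conc D) {g h : ℤ} (y : (matData (trData D)).Hom N O h)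
    (x : (matData (trData D)).Hom M N g) :
    mev ((matData (trData D)).comp y x) = gmul (mev y) (mev x) := by
  funext l i
  show tval (∑ j, (trData D).comp (y l j) (x j i)) = _
  rw [tval_sum]
  exact Finset.sum_congr rfl fun j _ => tval_comp hD hc _ _

lemma val_tr_hcast_id {X Y : trObj D} (h : X = Y) :
    val (D := D) (A := X.1) (B := Y.1) (e := 0 - X.2 + Y.2)
      ((trData D).hcast (A := X) (A' := X) (B := X) (B' := Y) (i := 0) (i' := 0)
        rfl h rfl ((trData D).id X)) =
      D.hcast rfl (congrArg Prod.fst h) rfl (D.id X.1) := by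
  subst h
  exact (val_cast _ _).trans (val_self _)

lemma mev_id : mev ((matData (trData D)).id M) = gone (twFam M) := by
  funext (j : Fin M.1) (i : Fin M.1)
  by_cases h : i = j
  · have e : (matData (trData D)).id M j i =
      (trData D).hcast rfl (congrArg M.2 h) rfl ((trData D).id (M.2 i)) := dif_pos h
    have e2 : gone (twFam M) j i = D.hcast rfl (congrArg (twFam M).X h) rfl
      (D.id ((twFam M).X i)) := dif_pos h
    exact ((congrArg tval e).trans (val_tr_hcast_id _)).trans e2.symm
  · have e : (matData (trData D)).id M j i = 0 := dif_neg h
    have e2 : gone (twFam M) j i = 0 := dif_neg h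
    exact ((congrArg tval e).trans tval_zero).trans e2.symm

lemma mev_permMat (σ : Equiv.Perm (Fin M.1)) :
    mev (permMat D M σ) = reV (twFam M) (twFam ⟨M.1, fun r => M.2 (σ r)⟩) σ (fun _ => rfl) := by
  funext (j : Fin M.1) (i : Fin M.1)
  by_cases h : σ j = i
  · have e : permMat D M σ j i =
      (trData D).hcast rfl (congrArg M.2 h.symm) rfl ((trData D).id (M.2 i)) := dif_pos h
    have e2 : reV (twFam M) (twFam ⟨M.1, fun r => M.2 (σ r)⟩) σ (fun _ => rfl) j i =
      D.hcast rfl (congrArg (twFam M).X h.symm) rfl (D.id ((twFam M).X i)) := dif_pos h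
    exact ((congrArg tval e).trans (val_tr_hcast_id _)).trans e2.symm
  · have e : permMat D M σ j i = 0 := dif_neg h
    have e2 : reV (twFam M) (twFam ⟨M.1, fun r => M.2 (σ r)⟩) σ (fun _ => rfl) j i = 0 :=
      dif_neg h
    exact ((congrArg tval e).trans tval_zero).trans e2.symm

lemma mev_inj (hc : Conc D) {g : ℤ} {x y : (matData (trData D)).Hom M N g}
    (h : mev x = mev y) : x = y := by
  funext j i
  exact val_inj hc (congrFun (congrFun h j) i)

lemma mev_homog {g : ℤ} (x : (matData (trData D)).Hom M N g) : Homog g (mev x) := by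
  intro j i h
  refine val_of_ne ?_ _
  have : -(N.2 j).2 ≠ -(M.2 i).2 + g := h
  omega

lemma mev_surj {g : ℤ} (P : GMat (twFam M) (twFam N)) (hP : Homog g P) :
    ∃ x : (matData (trData D)).Hom M N g, mev x = P := by
  let x : (matData (trData D)).Hom M N g := fun j i => if h : 0 = g - (M.2 i).2 + (N.2 j).2 then
    D.cast (A := (M.2 i).1) (B := (N.2 j).1) h (P j i) else (0 : D.Hom _ _ _)
  refine ⟨x, ?_⟩
  funext (j : Fin N.1) (i : Fin M.1)
  by_cases h : 0 = g - (M.2 i).2 + (N.2 j).2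
  · have e : x j i = D.cast (A := (M.2 i).1) (B := (N.2 j).1) h (P j i) := dif_pos h
    exact (congrArg tval e).trans ((val_cast _ _).trans (val_self _))
  · have e : x j i = 0 := dif_neg h
    have e2 : P j i = 0 := by
      refine hP j i ?_
      show -(N.2 j).2 ≠ -(M.2 i).2 + g
      omega
    exact ((congrArg tval e).trans tval_zero).trans e2.symm

lemma tr_d_zero (hD : IsDGCat D) (hc : Conc D) {X Y : (trData D).Obj} {g : ℤ} (x : (trData D).Hom X Y g) :
    (trData D).d x = 0 := by
  have h : ∀ {e e' : ℤ} (h : e + 1 = e') (y : D.Hom X.1 Y.1 e),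
      ((-1 : k) ^ Y.2) • D.cast h (D.d y) = 0 := by
    intro e e' h y
    rw [d_eq_zero hD hc, cast_zero', smul_zero]
  exact h _ _

lemma mat_d_zero (hD : IsDGCat D) (hc : Conc D) {g : ℤ} (x : (matData (trData D)).Hom M N g) :
    (matData (trData D)).d x = 0 := by
  funext j i
  exact tr_d_zero hD hc _

lemma MC_iff (hD : IsDGCat D) (hc : Conc D) (p : (matData (trData D)).Hom M M 1) :
    (matData (trData D)).MC p ↔ gmul (mev p) (mev p) = 0 := by
  unfold DGData.MC
  rw [mat_d_zero hD hc, zero_add, ← mev_comp hD hc]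
  constructor
  · intro h; rw [h]; exact mev_zero
  · intro h; exact mev_inj hc (h.trans mev_zero.symm)

end mev

/-- The graded object of a twisted complex. -/
def twO {D : DGData k} (hD : IsDGCat D) (hc : Conc D) (X : twObj (matData (trData D))) : GObj D :=
  { twFam X.1 with
    p := mev X.2.1
    hp := mev_homog _
    hpp := (MC_iff hD hc _).1 X.2.2 }

lemma mev_tw_d {D : DGData k} (hD : IsDGCat D) (hc : Conc D) {M N : matObj (trData D)} {g : ℤ}
    (q : (matData (trData D)).Hom N N 1) (p : (matData (trData D)).Hom M M 1)
    (x : (matData (trData D)).Hom M N g) :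
    mev ((matData (trData D)).cast (show 1 + g = g + 1 by ring) ((matData (trData D)).comp q x) +
      (matData (trData D)).d x + ((-1 : k) ^ (g + 1)) • (matData (trData D)).cast rfl
        ((matData (trData D)).comp x p)) =
      gmul (mev q) (mev x) - ((-1 : k) ^ g) • gmul (mev x) (mev p) := by
  rw [mev_add, mev_add, mev_smul, mev_cast, mev_cast, mev_comp hD hc, mev_comp hD hc,
    mat_d_zero hD hc, mev_zero, add_zero, zpow_add₀ (by simp), zpow_one, mul_neg, mul_one,
    neg_smul, ← sub_eq_add_neg]

/-- Evaluation of the dg category of twisted complexes. -/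
def twEv {D : DGData k} (hD : IsDGCat D) (hc : Conc D) : Ev D (twData (matData (trData D))) where
  o := twO hD hc
  ev := fun {X Y g} x => mev (M := X.1) (N := Y.1) (g := g) x
  add := fun {X Y g} x y => mev_add (M := X.1) (N := Y.1) (g := g) x y
  smul := fun {X Y g} c x => mev_smul (M := X.1) (N := Y.1) (g := g) c x
  comp := fun {X Y Z g h} y x => mev_comp (M := X.1) (N := Y.1) (O := Z.1) (g := g) (h := h)
    hD hc y x
  id X := mev_id
  d := fun {X Y g} x => mev_tw_d hD hc Y.2.1 X.2.1 x
  inj := fun {X Y g} x y h => mev_inj (M := X.1) (N := Y.1) (g := g) hc h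
  homog := fun {X Y g} x => mev_homog (M := X.1) (N := Y.1) (g := g) x
  surj := fun {X Y g} P hP => mev_surj (M := X.1) (N := Y.1) (g := g) P hP

/-- Evaluation of the pretriangulated hull. -/
def preEv {D : DGData k} (hD : IsDGCat D) (hc : Conc D) : Ev D (pretrData D) where
  o X := twO hD hc X.1
  ev := fun {X Y g} x => (twEv hD hc).ev (X := X.1) (Y := Y.1) (g := g) x
  add := fun {X Y g} x y => (twEv hD hc).add (X := X.1) (Y := Y.1) (g := g) x y
  smul := fun {X Y g} c x => (twEv hD hc).smul (X := X.1) (Y := Y.1) (g := g) c x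
  comp := fun {X Y Z g h} y x =>
    (twEv hD hc).comp (X := X.1) (Y := Y.1) (Z := Z.1) (g := g) (h := h) y x
  id X := (twEv hD hc).id X.1
  d := fun {X Y g} x => (twEv hD hc).d (X := X.1) (Y := Y.1) (g := g) x
  inj := fun {X Y g} x y h => (twEv hD hc).inj (X := X.1) (Y := Y.1) (g := g) h
  homog := fun {X Y g} x => (twEv hD hc).homog (X := X.1) (Y := Y.1) (g := g) x
  surj := fun {X Y g} P hP => (twEv hD hc).surj (X := X.1) (Y := Y.1) (g := g) P hP

lemma tw_ess {D : DGData k} (hD : IsDGCat D) (hc : Conc D) : (twEv hD hc).Ess := by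
  intro A
  let f : Fin (Fintype.card A.I) ≃ A.I := (Fintype.equivFin A.I).symm
  let M : matObj (trData D) := ⟨Fintype.card A.I, fun r => (A.X (f r), -A.deg (f r))⟩
  have hP : Homog (A := twFam M) (B := twFam M) 1 (fun j i => A.p (f j) (f i)) := by
    intro j i h
    refine A.hp _ _ ?_
    have : - -A.deg (f j) ≠ - - A.deg (f i) + 1 := h
    omega
  obtain ⟨p, hp⟩ := mev_surj (M := M) (N := M) _ hP
  have hMC : (matData (trData D)).MC p := by
    rw [MC_iff hD hc, hp]
    funext l i
    have := congrFun (congrFun A.hpp (f l)) (f i)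
    rw [gmul, ← Equiv.sum_comp f] at this
    exact this
  refine ⟨⟨M, p, hMC⟩, ⟨reIso hD A _ f (fun _ => rfl) (fun r => (neg_neg _).symm) ?_⟩⟩
  intro j i
  exact congrFun (congrFun hp j) i

/-- The last part of the statement, at the level of graded families. -/
lemma tw_sort {D : DGData k} (hD : IsDGCat D) (hc : Conc D) (X : twObj (matData (trData D))) :
    ∃ (σ : Equiv.Perm (Fin X.1.1))
        (q' : (matData (trData D)).Hom ⟨X.1.1, fun r => X.1.2 (σ r)⟩
          ⟨X.1.1, fun r => X.1.2 (σ r)⟩ 1)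
        (hq' : (matData (trData D)).MC q'),
        OneSided (D := D) ⟨⟨X.1.1, fun r => X.1.2 (σ r)⟩, ⟨q', hq'⟩⟩ ∧
        ∃ e : GIso (twO hD hc X) (twO hD hc ⟨⟨X.1.1, fun r => X.1.2 (σ r)⟩, ⟨q', hq'⟩⟩),
          e.u = mev (permMat D X.1 σ) := by
  let σ := Tuple.sort (fun r : Fin X.1.1 => -(X.1.2 r).2)
  let M : matObj (trData D) := ⟨X.1.1, fun r => X.1.2 (σ r)⟩
  let q' : (matData (trData D)).Hom M M 1 := fun j i => X.2.1 (σ j) (σ i)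
  have hMC : (matData (trData D)).MC q' := by
    rw [MC_iff hD hc]
    funext l i
    have := congrFun (congrFun ((MC_iff hD hc _).1 X.2.2) (σ l)) (σ i)
    exact (Equiv.sum_comp σ (fun j => c0 (mev X.2.1 (σ l) j) (mev X.2.1 j (σ i)))).trans this
  refine ⟨σ, q', hMC, ?_, reIso hD (twO hD hc X) (twO hD hc ⟨M, q', hMC⟩) σ (fun _ => rfl)
    (fun _ => rfl) (fun _ _ => rfl), (mev_permMat σ).symm⟩
  intro j i hji
  have h1 : -(X.1.2 (σ j)).2 ≤ -(X.1.2 (σ i)).2 :=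
    Tuple.monotone_sort (fun r : Fin X.1.1 => -(X.1.2 r).2) hji
  refine hc (A := (X.1.2 (σ i)).1) (B := (X.1.2 (σ j)).1)
    (1 - (X.1.2 (σ i)).2 + (X.1.2 (σ j)).2) ?_ _
  omega

lemma pre_ess {D : DGData k} (hD : IsDGCat D) (hc : Conc D) : (preEv hD hc).Ess := by
  intro A
  obtain ⟨X, ⟨e⟩⟩ := tw_ess hD hc A
  obtain ⟨σ, q', hq', h1, e', -⟩ := tw_sort hD hc X
  exact ⟨⟨_, h1⟩, ⟨e.trans hD e'⟩⟩

/-! ### Evaluation of the bounded complexes -/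

lemma chb_finite {D : DGData k} (X : ChbObj D) : Finite ((i : ℤ) × Fin (X.X i).1) := by
  obtain ⟨N, hN⟩ := X.bounded
  let f : ((i : ℤ) × Fin (X.X i).1) →
      ((i : Set.Icc (-(N : ℤ)) N) × Fin (X.X i).1) := fun r =>
    ⟨⟨r.1, by
      by_contra h
      have h0 := hN r.1 (by rw [Set.mem_Icc] at h; omega)
      exact absurd r.2.2 (by omega)⟩, r.2⟩
  refine Finite.of_injective f ?_
  rintro ⟨i, s⟩ ⟨j, t⟩ h
  simp only [f, Sigma.mk.injEq, Subtype.mk.injEq] at h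
  obtain ⟨h1, h2⟩ := h
  subst h1
  rw [eq_of_heq h2]

/-- The graded family underlying a bounded complex. -/
noncomputable def chFam {D : DGData k} (X : ChbObj D) : GFam D :=
  ⟨(i : ℤ) × Fin (X.X i).1, @Fintype.ofFinite _ (chb_finite X), fun r => (X.X r.1).2 r.2,
    fun r => r.1⟩

/-- Change of the target degree of a matrix. -/
def tgt {D : DGData k} {A : matObj D} (Y : ℤ → matObj D) {a b : ℤ} (h : a = b)
    (α : (matData D).Hom A (Y a) 0) : (matData D).Hom A (Y b) 0 :=
  (matData D).hcast rfl (congrArg Y h) rfl α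

lemma hcast_comp {D : DGData k} {A B : matObj D} (Z : ℤ → matObj D) {a b : ℤ} (h : Z a = Z b)
    (h0 : (0 : ℤ) + 0 = 0) (hab : a = b)
    (β : (matData D).Hom B (Z a) 0) (α : (matData D).Hom A B 0) :
    (matData D).hcast rfl h h0 ((matData D).comp β α) =
      fun l i => ∑ j, c0 (tgt Z hab β l j) (α j i) := by
  subst hab
  have key : ∀ (e : ℤ) (he : e = 0) (x : (matData D).Hom A (Z a) e),
      (matData D).hcast rfl h he x = fun l i => D.cast he (x l i) := by
    intro e he x; subst he; rfl
  rw [key]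
  funext l i
  show D.cast h0 (∑ j, D.comp (β l j) (α j i)) = ∑ j, D.cast (zero_add 0) (D.comp (β l j) (α j i))
  exact cast_sum' D h0 Finset.univ (fun j => D.comp (β l j) (α j i))

lemma tgt_hcast_comp {D : DGData k} {A B : matObj D} (Z : ℤ → matObj D) {a b c : ℤ} (h : Z a = Z b)
    (h0 : (0 : ℤ) + 0 = 0) (hab : a = b) (hbc : b = c)
    (β : (matData D).Hom B (Z a) 0) (α : (matData D).Hom A B 0) :
    tgt Z hbc ((matData D).hcast rfl h h0 ((matData D).comp β α)) =
      fun l i => ∑ j, c0 (tgt Z (hab.trans hbc) β l j) (α j i) := by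
  subst hbc
  exact hcast_comp Z h h0 hab β α

/-- The matrix of a homogeneous map of bounded complexes. -/
noncomputable def chEv0 {D : DGData k} {X Y : ChbObj D} {g : ℤ}
    (α : ∀ i : ℤ, (matData D).Hom (X.X i) (Y.X (i + g)) 0) : GMat (chFam X) (chFam Y) :=
  fun j i => if h : i.1 + g = j.1 then tgt Y.X h (α i.1) j.2 i.2 else 0

section chb
variable {D : DGData k} {X Y Z : ChbObj D}

lemma chEv0_pos {g : ℤ} (α : ∀ i : ℤ, (matData D).Hom (X.X i) (Y.X (i + g)) 0) {i j : ℤ}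
    (h : i + g = j) (s : Fin (X.X i).1) (t : Fin (Y.X j).1) :
    chEv0 α ⟨j, t⟩ ⟨i, s⟩ = tgt Y.X h (α i) t s := dif_pos h

lemma chEv0_neg {g : ℤ} (α : ∀ i : ℤ, (matData D).Hom (X.X i) (Y.X (i + g)) 0) {i j : ℤ}
    (h : i + g ≠ j) (s : Fin (X.X i).1) (t : Fin (Y.X j).1) :
    chEv0 α ⟨j, t⟩ ⟨i, s⟩ = 0 := dif_neg h

lemma tgt_add {A : matObj D} (Y : ℤ → matObj D) {a b : ℤ} (h : a = b)
    (α β : (matData D).Hom A (Y a) 0) : tgt Y h (α + β) = tgt Y h α + tgt Y h β := by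
  subst h; rfl

lemma tgt_sub {A : matObj D} (Y : ℤ → matObj D) {a b : ℤ} (h : a = b)
    (α β : (matData D).Hom A (Y a) 0) : tgt Y h (α - β) = tgt Y h α - tgt Y h β := by
  subst h; rfl

lemma tgt_smul {A : matObj D} (Y : ℤ → matObj D) {a b : ℤ} (h : a = b) (c : k)
    (α : (matData D).Hom A (Y a) 0) : tgt Y h (c • α) = c • tgt Y h α := by
  subst h; rfl

lemma chEv0_homog {g : ℤ} (α : ∀ i : ℤ, (matData D).Hom (X.X i) (Y.X (i + g)) 0) :
    Homog g (chEv0 α) := by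
  rintro ⟨j, t⟩ ⟨i, s⟩ h
  exact chEv0_neg α (Ne.symm h) s t

lemma chEv0_add {g : ℤ} (α β : ∀ i : ℤ, (matData D).Hom (X.X i) (Y.X (i + g)) 0) :
    chEv0 (fun i => α i + β i) = chEv0 α + chEv0 β := by
  funext ⟨j, t⟩ ⟨i, s⟩
  show _ = chEv0 α _ _ + chEv0 β _ _
  by_cases h : i + g = j
  · rw [chEv0_pos _ h, chEv0_pos _ h, chEv0_pos _ h, tgt_add]; rfl
  · rw [chEv0_neg _ h, chEv0_neg _ h, chEv0_neg _ h, add_zero]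

lemma chEv0_sub {g : ℤ} (α β : ∀ i : ℤ, (matData D).Hom (X.X i) (Y.X (i + g)) 0) :
    chEv0 (fun i => α i - β i) = chEv0 α - chEv0 β := by
  funext ⟨j, t⟩ ⟨i, s⟩
  show _ = chEv0 α _ _ - chEv0 β _ _
  by_cases h : i + g = j
  · rw [chEv0_pos _ h, chEv0_pos _ h, chEv0_pos _ h, tgt_sub]; rfl
  · rw [chEv0_neg _ h, chEv0_neg _ h, chEv0_neg _ h, sub_zero]

lemma chEv0_smul {g : ℤ} (c : k) (α : ∀ i : ℤ, (matData D).Hom (X.X i) (Y.X (i + g)) 0) :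
    chEv0 (fun i => c • α i) = c • chEv0 α := by
  funext ⟨j, t⟩ ⟨i, s⟩
  show _ = c • chEv0 α _ _
  by_cases h : i + g = j
  · rw [chEv0_pos _ h, chEv0_pos _ h, tgt_smul]; rfl
  · rw [chEv0_neg _ h, chEv0_neg _ h, smul_zero]

lemma chEv0_comp (hD : IsDGCat D) {g h m : ℤ}
    (β : ∀ i : ℤ, (matData D).Hom (Y.X i) (Z.X (i + h)) 0)
    (α : ∀ i : ℤ, (matData D).Hom (X.X i) (Y.X (i + g)) 0) (hm : h + g = m)
    (hZ : ∀ i, Z.X (i + g + h) = Z.X (i + m)) (h0 : (0 : ℤ) + 0 = 0) :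
    chEv0 (X := X) (Y := Z) (g := m) (fun i => (matData D).hcast rfl (hZ i) h0
      ((matData D).comp (β (i + g)) (α i))) = gmul (chEv0 β) (chEv0 α) := by
  funext ⟨l, t⟩ ⟨i, s⟩
  by_cases hl : i + m = l
  · refine (chEv0_pos _ hl s t).trans ?_
    refine (congrFun (congrFun (tgt_hcast_comp Z.X (hZ i) h0
      (show i + g + h = i + m by omega) hl (β (i + g)) (α i)) t) s).trans ?_
    refine @Fintype.sum_of_injective _ (chFam Y).I _ _ (chFam Y).fin _
      (fun r : Fin (Y.X (i + g)).1 => (⟨i + g, r⟩ : (i : ℤ) × Fin (Y.X i).1))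
      ?_ _ _ ?_ ?_
    · intro a b hab
      exact eq_of_heq (Sigma.mk.inj hab).2
    · rintro ⟨j, r⟩ hr
      have hj : i + g ≠ j := by
        intro hj
        subst hj
        exact hr ⟨r, rfl⟩
      exact (congrArg (c0 _) (chEv0_neg α hj s r)).trans (c0_zero_right hD _)
    · intro r
      exact (congrArg₂ c0 (chEv0_pos β (show i + g + h = l by omega) r t)
        (chEv0_pos α rfl s r)).symm
  · refine (chEv0_neg _ hl s t).trans ?_
    symm
    refine (chEv0_homog β).gmul hD (chEv0_homog α) _ _ ?_
    show l ≠ i + (h + g)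
    omega

lemma chEv0_inj {g : ℤ} {α β : ∀ i : ℤ, (matData D).Hom (X.X i) (Y.X (i + g)) 0}
    (h : chEv0 α = chEv0 β) : α = β := by
  funext i t s
  have := congrFun (congrFun h ⟨i + g, t⟩) ⟨i, s⟩
  rw [chEv0_pos _ rfl, chEv0_pos _ rfl] at this
  exact this

lemma chEv0_surj {g : ℤ} (M : GMat (chFam X) (chFam Y)) (hM : Homog g M) :
    ∃ α : ∀ i : ℤ, (matData D).Hom (X.X i) (Y.X (i + g)) 0, chEv0 α = M := by
  refine ⟨fun i t s => M ⟨i + g, t⟩ ⟨i, s⟩, ?_⟩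
  funext ⟨j, t⟩ ⟨i, s⟩
  by_cases h : i + g = j
  · subst h
    exact chEv0_pos (X := X) (Y := Y) (fun i t s => M ⟨i + g, t⟩ ⟨i, s⟩) rfl s t
  · exact (chEv0_neg (X := X) (Y := Y) (fun i t s => M ⟨i + g, t⟩ ⟨i, s⟩) h s t).trans
      (hM ⟨j, t⟩ ⟨i, s⟩ (Ne.symm h)).symm

lemma chEv0_zero {g : ℤ} :
    chEv0 (X := X) (Y := Y) (fun i => (0 : (matData D).Hom (X.X i) (Y.X (i + g)) 0)) = 0 := by
  have := chEv0_smul (X := X) (Y := Y) (0 : k)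
    (fun i => (0 : (matData D).Hom (X.X i) (Y.X (i + g)) 0))
  simpa using this

lemma chEv0_id : chEv0 (X := X) (Y := X) (g := 0) ((chbData D).id X) = gone (chFam X) := by
  funext ⟨j, t⟩ ⟨i, s⟩
  by_cases h : i + 0 = j
  · refine (chEv0_pos (X := X) (Y := X) (g := 0) ((chbData D).id X) h s t).trans ?_
    have hij : i = j := by omega
    subst hij
    have e : ∀ (a : ℤ) (ha : i = a) (ha' : a = i),
        tgt X.X ha' ((matData D).hcast rfl (congrArg X.X ha) rfl ((matData D).id (X.X i))) =
          (matData D).id (X.X i) := by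
      intro a ha ha'; subst ha; rfl
    refine (congrFun (congrFun (e (i + 0) h.symm h) t) s).trans ?_
    by_cases hst : s = t
    · subst hst
      refine (dif_pos rfl).trans ?_
      symm
      exact dif_pos rfl
    · refine (dif_neg hst).trans ?_
      symm
      refine dif_neg ?_
      intro hh
      exact hst (eq_of_heq (Sigma.mk.inj hh).2)
  · refine (chEv0_neg (X := X) (Y := X) (g := 0) ((chbData D).id X) h s t).trans ?_
    symm
    refine dif_neg ?_
    intro hh
    exact h (by rw [add_zero]; exact congrArg Sigma.fst hh)

end chb

/-- The graded object of a bounded complex. -/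
noncomputable def chO {D : DGData k} (hD : IsDGCat D) (X : ChbObj D) : GObj D :=
  { chFam X with
    p := chEv0 (X := X) (Y := X) (g := 1) X.dd
    hp := chEv0_homog _
    hpp := by
      rw [← chEv0_comp hD X.dd X.dd (m := 2) (by norm_num)
        (fun i => congrArg X.X (by ring)) (by norm_num), ← chEv0_zero (g := 2)]
      congr 1
      funext i
      rw [X.dd_sq]
      have : ∀ (C C' : matObj D) (h : C = C') (e : ℤ) (he : e = 0),
        (matData D).hcast (A := X.X i) rfl h he (0 : (matData D).Hom (X.X i) C e) = 0 := by
        intro C C' h e he; subst h; subst he; rfl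
      exact this _ _ _ _ _ }

/-- Evaluation of the dg category of bounded complexes. -/
noncomputable def chEv {D : DGData k} (hD : IsDGCat D) : Ev D (chbData D) where
  o := chO hD
  ev := fun {X Y g} x => chEv0 (X := X) (Y := Y) (g := g) x
  add := fun {X Y g} x y => chEv0_add (X := X) (Y := Y) (g := g) x y
  smul := fun {X Y g} c x => chEv0_smul (X := X) (Y := Y) (g := g) c x
  comp := fun {X Y Z g h} y x => chEv0_comp (X := X) (Y := Y) (Z := Z) hD (g := g) (h := h) y x
    rfl (fun i => congrArg Z.X (by ring)) (by norm_num)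
  id X := chEv0_id
  d := fun {X Y g} x => by
    refine (chEv0_sub (X := X) (Y := Y) (g := g + 1) _ _).trans ?_
    refine congrArg₂ (· - ·) ?_ ?_
    · exact chEv0_comp (X := X) (Y := Y) (Z := Y) hD (g := g) (h := 1) Y.dd x (by ring)
        (fun i => congrArg Y.X (by ring)) (by norm_num)
    · refine (chEv0_smul (X := X) (Y := Y) (g := g + 1) _ _).trans ?_
      refine congrArg (fun M => ((-1 : k) ^ g) • M) ?_
      exact chEv0_comp (X := X) (Y := X) (Z := Y) hD (g := 1) (h := g) x X.dd rfl
        (fun i => congrArg Y.X (by ring)) (by norm_num)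
  inj := fun {X Y g} x y h => chEv0_inj (X := X) (Y := Y) (g := g) h
  homog := fun {X Y g} x => chEv0_homog (X := X) (Y := Y) (g := g) x
  surj := fun {X Y g} P hP => chEv0_surj (X := X) (Y := Y) (g := g) P hP

lemma ch_ess {D : DGData k} (hD : IsDGCat D) : (chEv hD).Ess := by
  classical
  intro A
  let e : ∀ i : ℤ, Fin (Fintype.card {r : A.I // A.deg r = i}) ≃ {r : A.I // A.deg r = i} :=
    fun i => (Fintype.equivFin _).symm
  let X : ℤ → matObj D := fun i => ⟨Fintype.card {r : A.I // A.deg r = i}, fun s => A.X (e i s).1⟩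
  let f : ((i : ℤ) × Fin (X i).1) ≃ A.I :=
    (Equiv.sigmaCongrRight e).trans (Equiv.sigmaFiberEquiv A.deg)
  have hf : ∀ (i : ℤ) (s : Fin (X i).1), f ⟨i, s⟩ = (e i s).1 := fun i s => rfl
  let dd : ∀ i : ℤ, (matData D).Hom (X i) (X (i + 1)) 0 := fun i t s =>
    A.p (e (i + 1) t).1 (e i s).1
  have hsq : ∀ i : ℤ, (matData D).comp (dd (i + 1)) (dd i) = 0 := by
    intro i
    funext l s
    have h1 : gmul A.p A.p (e (i + 1 + 1) l).1 (e i s).1 = 0 := congrFun (congrFun A.hpp (e (i + 1 + 1) l).1) (e i s).1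
    have h2 : ∑ j, c0 (A.p (e (i + 1 + 1) l).1 (e (i + 1) j).1)
        (A.p (e (i + 1) j).1 (e i s).1) = 0 := by
      refine Eq.trans ?_ h1
      refine Fintype.sum_of_injective
        (fun r : Fin (X (i + 1)).1 => ((e (i + 1) r).1 : A.I)) ?_ _ _ ?_ ?_
      · intro a b hab
        exact (e (i + 1)).injective (Subtype.ext hab)
      · intro r hr
        have : A.p r (e i s).1 = 0 := by
          refine A.hp _ _ ?_
          intro hdeg
          rw [(e i s).2] at hdeg
          exact hr ⟨(e (i + 1)).symm ⟨r, hdeg⟩, by simp⟩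
        rw [this, c0_zero_right hD]
      · intro r; rfl
    have h3 : D.cast (zero_add 0) (∑ j, D.comp (A.p (e (i + 1 + 1) l).1 (e (i + 1) j).1)
        (A.p (e (i + 1) j).1 (e i s).1)) = 0 :=
      (cast_sum' D _ _ _).trans h2
    exact h3
  have hb : ∃ N : ℕ, ∀ i : ℤ, (i < -(N : ℤ) ∨ (N : ℤ) < i) → (X i).1 = 0 := by
    refine ⟨∑ r : A.I, (A.deg r).natAbs, fun i hi => ?_⟩
    refine Fintype.card_eq_zero_iff.2 ⟨fun r => ?_⟩
    have h1 : (A.deg r.1).natAbs ≤ ∑ r : A.I, (A.deg r).natAbs :=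
      Finset.single_le_sum (f := fun r => (A.deg r).natAbs) (fun _ _ => Nat.zero_le _)
        (Finset.mem_univ r.1)
    have h2 := r.2
    omega
  refine ⟨⟨X, dd, hsq, hb⟩, ⟨reIso hD A (chO hD ⟨X, dd, hsq, hb⟩) f (fun _ => rfl) ?_ ?_⟩⟩
  · rintro ⟨i, s⟩
    exact (e i s).2
  · rintro ⟨j, t⟩ ⟨i, s⟩
    by_cases h : i + 1 = j
    · subst h
      exact chEv0_pos (X := ⟨X, dd, hsq, hb⟩) (Y := ⟨X, dd, hsq, hb⟩) dd rfl s t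
    · refine (chEv0_neg (X := ⟨X, dd, hsq, hb⟩) (Y := ⟨X, dd, hsq, hb⟩) dd h s t).trans ?_
      refine (A.hp _ _ ?_).symm
      have h1 : A.deg (e j t).1 = j := (e j t).2
      have h2 : A.deg (e i s).1 = i := (e i s).2
      show A.deg (e j t).1 ≠ A.deg (e i s).1 + 1
      omega


/-- **Statement 9.** Let `A` be a `k`-category, regarded as a dg category with
hom-spaces concentrated in degree `0`.  Then the inclusion
`pretr(A) ⊆ Twist((A^[•])^⊕)` of the full dg subcategory of one-sided twisted
complexes is an equivalence of dg categories, and both dg categories are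
equivalent to `Ch^b_dg(A)`.  In particular, every twisted complex over
`(A^[•])^⊕` is dg-isomorphic, via a permutation of its summands, to a
one-sided twisted complex. -/
theorem statement_9 (D : DGData k) (hD : IsDGCat D)
    (hconc : ∀ {A B : D.Obj} (i : ℤ), i ≠ 0 → ∀ x : D.Hom A B i, x = 0) :
    -- the inclusion is an equivalence of dg categories
    IsDGEquivalence (pretrIncl D) ∧
    -- `Twist((A^[•])^⊕)` is dg-equivalent to `Ch^b_dg(A)` …
    (∃ G : DGFunData (twData (matData (trData D))) (chbData D), IsDGEquivalence G) ∧
    -- … and so is `pretr(A)`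
    (∃ H : DGFunData (pretrData D) (chbData D), IsDGEquivalence H) ∧
    -- every twisted complex is dg-isomorphic, via the permutation matrix of a
    -- permutation of its summands, to a one-sided twisted complex
    (∀ X : twObj (matData (trData D)),
      ∃ (σ : Equiv.Perm (Fin X.1.1))
        (q' : (matData (trData D)).Hom ⟨X.1.1, fun r => X.1.2 (σ r)⟩
          ⟨X.1.1, fun r => X.1.2 (σ r)⟩ 1)
        (hq' : (matData (trData D)).MC q'),
        OneSided (D := D) ⟨⟨X.1.1, fun r => X.1.2 (σ r)⟩, ⟨q', hq'⟩⟩ ∧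
        ∃ v : (twData (matData (trData D))).Hom
            ⟨⟨X.1.1, fun r => X.1.2 (σ r)⟩, ⟨q', hq'⟩⟩ X 0,
          (twData (matData (trData D))).d (A := X)
            (B := ⟨⟨X.1.1, fun r => X.1.2 (σ r)⟩, ⟨q', hq'⟩⟩)
            (permMat D X.1 σ) = 0 ∧
          (twData (matData (trData D))).d
            (A := ⟨⟨X.1.1, fun r => X.1.2 (σ r)⟩, ⟨q', hq'⟩⟩) (B := X) v = 0 ∧
          (twData (matData (trData D))).cast (by norm_num)
            ((twData (matData (trData D))).comp (A := X)
              (B := ⟨⟨X.1.1, fun r => X.1.2 (σ r)⟩, ⟨q', hq'⟩⟩) (C := X)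
              v (permMat D X.1 σ)) = (twData (matData (trData D))).id X ∧
          (twData (matData (trData D))).cast (by norm_num)
            ((twData (matData (trData D))).comp
              (A := ⟨⟨X.1.1, fun r => X.1.2 (σ r)⟩, ⟨q', hq'⟩⟩) (B := X)
              (C := ⟨⟨X.1.1, fun r => X.1.2 (σ r)⟩, ⟨q', hq'⟩⟩)
              (permMat D X.1 σ) v) =
            (twData (matData (trData D))).id
              ⟨⟨X.1.1, fun r => X.1.2 (σ r)⟩, ⟨q', hq'⟩⟩) := by
  have hc : Conc D := fun {A B} i hi x => hconc i hi x
  refine ⟨⟨⟨fun _ _ => rfl, fun _ _ => rfl, fun _ => rfl, fun _ _ => rfl, fun _ => rfl⟩,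
    fun _ _ _ => Function.bijective_id, ?_⟩,
    Ev.equiv hD (twEv hD hc) (chEv hD) (tw_ess hD hc) (ch_ess hD),
    Ev.equiv hD (preEv hD hc) (chEv hD) (pre_ess hD hc) (ch_ess hD), ?_⟩
  · intro Y
    obtain ⟨σ, q', hq', h1, e, -⟩ := tw_sort hD hc Y
    obtain ⟨u, v, -, -, h⟩ := (twEv hD hc).lift
      (X := ⟨⟨Y.1.1, fun r => Y.1.2 (σ r)⟩, ⟨q', hq'⟩⟩) (Y := Y) e.symm
    exact ⟨⟨⟨⟨Y.1.1, fun r => Y.1.2 (σ r)⟩, ⟨q', hq'⟩⟩, h1⟩, u, v, h⟩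
  · intro X
    obtain ⟨σ, q', hq', h1, e, he⟩ := tw_sort hD hc X
    obtain ⟨u, v, hu, -, h2, h3, h4, h5⟩ := (twEv hD hc).lift
      (X := X) (Y := ⟨⟨X.1.1, fun r => X.1.2 (σ r)⟩, ⟨q', hq'⟩⟩) e
    have hu' : u = permMat D X.1 σ := mev_inj hc (hu.trans he)
    subst hu'
    exact ⟨σ, q', hq', h1, v, h2, h3, h5, h4⟩

end Statement9

end P
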